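/- Let A be a unital C*-algebra with a faithful state g. Then for every positive element y ∈ A, the norm of y is given by the formula ‖y‖_A = sup { g(c y c) / g(c²) : c ∈ A, c ≥ 0, c ≠ 0 }. (Note that g(c²) > 0 for every nonzero positive c by faithfulness of g.) -/

import Mathlib

open scoped ComplexOrder

/-!
Conjugating `y ≤ ‖y‖ • 1` by `c` gives `c * y * c ≤ ‖y‖ • (c * c)`, so a positive functional `g`
satisfies `g (c * y * c) ≤ ‖y‖ * g (c * c)`. Conversely, for `ε < ‖y‖` the cut-down
`c = (y - ε)₊` has norm `‖y‖ - ε`, hence is nonzero, and it is supported where `y ≥ ε`, so that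
`ε • (c * c) ≤ c * y * c` and the quotient at `c` is at least `ε`.
-/

open scoped NNReal

section PositiveFunctional

section StarOrderedRing

variable {A B : Type*} [NonUnitalSemiring A] [StarRing A] [PartialOrder A] [StarOrderedRing A]
  [AddCommMonoid B] [PartialOrder B]

theorem map_nonneg_of_map_star_mul_self_nonneg {F : Type*} [FunLike F A B]
    [AddMonoidHomClass F A B] [IsOrderedAddMonoid B] {f : F} (hf : ∀ a, 0 ≤ f (star a * a))
    {a : A} (ha : 0 ≤ a) : 0 ≤ f a := by
  rw [StarOrderedRing.nonneg_iff] at ha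
  induction ha using AddSubmonoid.closure_induction with
  | mem _ h =>
    obtain ⟨x, rfl⟩ := h
    exact hf x
  | zero => rw [map_zero]
  | add _ _ _ _ hx hy =>
    rw [map_add]
    exact add_nonneg hx hy

theorem map_star_mul_self_pos {R : Type*} [Semiring R] [Module R A] [Module R B] {g : A →ₚ[R] B}
    (hg : ∀ a, g (star a * a) = 0 → a = 0) {a : A} (ha : a ≠ 0) : 0 < g (star a * a) :=
  (map_nonneg g (star_mul_self_nonneg a)).lt_of_ne' (mt (hg a) ha)

theorem map_conjugate_div_nonneg {𝕜 : Type*} [DivisionSemiring 𝕜] [PartialOrder 𝕜]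
    [PosMulReflectLT 𝕜] [Module 𝕜 A] {g : A →ₚ[𝕜] 𝕜} {c y : A} (hc : IsSelfAdjoint c)
    (hy : 0 ≤ y) : 0 ≤ g (c * y * c) / g (c * c) :=
  div_nonneg (map_nonneg g (hc.conjugate_nonneg hy)) (map_nonneg g hc.mul_self_nonneg)

end StarOrderedRing

variable {𝕜 E : Type*} [DivisionSemiring 𝕜] [PartialOrder 𝕜] [MulPosReflectLT 𝕜]
  [AddCommMonoid E] [PartialOrder E] [Module 𝕜 E] {g : E →ₚ[𝕜] 𝕜} {a b : E} {k : 𝕜}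

theorem le_map_div_map_of_smul_le (hb : 0 < g b) (h : k • b ≤ a) : k ≤ g a / g b :=
  (le_div_iff₀ hb).2 <| by simpa using OrderHomClass.mono g h

theorem map_div_map_le_of_le_smul (hb : 0 < g b) (h : a ≤ k • b) : g a / g b ≤ k :=
  (div_le_iff₀ hb).2 <| by simpa using OrderHomClass.mono g h

end PositiveFunctional

section NonUnitalCStarAlgebra

variable {A : Type*} [NonUnitalCStarAlgebra A] [PartialOrder A] [StarOrderedRing A]

/-- The cut-down `(a - ε)₊` of a positive element `a`: its functional calculus by
`t ↦ max (t - ε) 0`, written with the truncated subtraction of `ℝ≥0`. When `a` is not positive,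
`cfcₙ` gives the junk value `0`. -/
noncomputable def cutDown (a : A) (ε : ℝ≥0) : A := cfcₙ (fun t : ℝ≥0 ↦ t - ε) a

theorem cutDown_nonneg (a : A) (ε : ℝ≥0) : 0 ≤ cutDown a ε := cfcₙ_nonneg_of_predicate

variable {a c y : A} {ε : ℝ≥0} {g : A →ₚ[ℂ] ℂ}

theorem nnnorm_cutDown (ha : 0 ≤ a) : ‖cutDown a ε‖₊ = ‖a‖₊ - ε :=
  MonotoneOn.nnnorm_cfcₙ _ a fun _ _ _ _ h ↦ tsub_le_tsub_right h ε

theorem cutDown_ne_zero (ha : 0 ≤ a) (hε : ε < ‖a‖₊) : cutDown a ε ≠ 0 := by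
  rw [← nnnorm_pos, nnnorm_cutDown ha]
  exact tsub_pos_of_lt hε

theorem smul_cutDown_mul_self_le_conjugate (ha : 0 ≤ a) :
    ε • (cutDown a ε * cutDown a ε) ≤ cutDown a ε * a * cutDown a ε := by
  have pointwise (t : ℝ≥0) : ε * ((t - ε) * (t - ε)) ≤ (t - ε) * t * (t - ε) := by
    obtain h | h := le_total t ε
    · simp [tsub_eq_zero_of_le h]
    · calc ε * ((t - ε) * (t - ε)) ≤ t * ((t - ε) * (t - ε)) := by gcongr
        _ = (t - ε) * t * (t - ε) := by ring
  calc ε • (cutDown a ε * cutDown a ε)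
    _ = cfcₙ (fun t : ℝ≥0 ↦ ε * ((t - ε) * (t - ε))) a := by
      rw [cfcₙ_const_mul ε _ a, cfcₙ_mul _ _ a, cutDown]
    _ ≤ cfcₙ (fun t : ℝ≥0 ↦ (t - ε) * t * (t - ε)) a := cfcₙ_mono fun t _ ↦ pointwise t
    _ = cutDown a ε * a * cutDown a ε := by
      rw [cfcₙ_mul _ _ a, cfcₙ_mul _ _ a, cfcₙ_id' ℝ≥0 a, cutDown]

theorem map_conjugate_div_le_norm (hc : IsSelfAdjoint c) (hgc : 0 < g (c * c))
    (hy : IsSelfAdjoint y) : g (c * y * c) / g (c * c) ≤ ‖y‖ :=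
  map_div_map_le_of_le_smul hgc <| by
    simpa [hc.star_eq] using CStarAlgebra.star_left_conjugate_le_norm_smul (a := c) hy

theorem le_map_conjugate_cutDown_div (hy : 0 ≤ y)
    (hgc : 0 < g (cutDown y ε * cutDown y ε)) :
    (ε : ℂ) ≤ g (cutDown y ε * y * cutDown y ε) / g (cutDown y ε * cutDown y ε) :=
  le_map_div_map_of_smul_le hgc <| by
    simpa [NNReal.smul_def] using smul_cutDown_mul_self_le_conjugate (ε := ε) hy

theorem norm_eq_sSup_state_quotients_general [Nontrivial A]
    (hg : ∀ a, g (star a * a) = 0 → a = 0) (hy : 0 ≤ y) :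
    IsLUB {r : ℝ | ∃ c : A, 0 ≤ c ∧ c ≠ 0 ∧ (r : ℂ) = g (c * y * c) / g (c * c)} ‖y‖ := by
  have map_mul_self_pos {c : A} (hc : 0 ≤ c) (hc0 : c ≠ 0) : 0 < g (c * c) := by
    simpa [hc.star_eq] using map_star_mul_self_pos hg hc0
  refine ⟨?_, fun b hb ↦ ?_⟩
  · rintro r ⟨c, hc, hc0, hr⟩
    rw [← Complex.real_le_real, hr]
    exact map_conjugate_div_le_norm (.of_nonneg hc) (map_mul_self_pos hc hc0) (.of_nonneg hy)
  · have quotient_le {c : A} (hc : 0 ≤ c) (hc0 : c ≠ 0) : g (c * y * c) / g (c * c) ≤ b := by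
      obtain ⟨r, -, hr⟩ := RCLike.nonneg_iff_exists_ofReal.mp
        (map_conjugate_div_nonneg (g := g) (.of_nonneg hc) hy)
      rw [← hr]
      exact Complex.real_le_real.mpr (hb ⟨c, hc, hc0, hr⟩)
    have b_nonneg : 0 ≤ b := by
      obtain ⟨a, ha⟩ := exists_ne (0 : A)
      have hc : 0 ≤ star a * a := star_mul_self_nonneg a
      have hc0 : star a * a ≠ 0 := (CStarRing.star_mul_self_ne_zero_iff a).mpr ha
      exact Complex.zero_le_real.mp
        ((map_conjugate_div_nonneg (.of_nonneg hc) hy).trans (quotient_le hc hc0))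
    lift b to ℝ≥0 using b_nonneg
    refine NNReal.coe_le_coe.mpr (le_of_forall_lt_imp_le_of_dense fun ε (hε : ε < ‖y‖₊) ↦ ?_)
    have hc := cutDown_nonneg y ε
    have hc0 := cutDown_ne_zero hy hε
    exact_mod_cast (le_map_conjugate_cutDown_div hy (map_mul_self_pos hc hc0)).trans
      (quotient_le hc hc0)

end NonUnitalCStarAlgebra

/-- Let `A` be a unital C*-algebra with a faithful state `g`. Then for every
positive element `y` of `A`, the norm of `y` is given by
`‖y‖ = sup { g (c * y * c) / g (c * c) : c ∈ A, c ≥ 0, c ≠ 0 }`. -/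
theorem norm_eq_sSup_state_quotients
    {A : Type*} [CStarAlgebra A] [PartialOrder A] [StarOrderedRing A]
    -- `g` is a state on `A`: a positive linear functional with `g 1 = 1` …
    (g : A →L[ℂ] ℂ) (hg_one : g 1 = 1)
    (hg_pos : ∀ a : A, 0 ≤ g (star a * a))
    -- … which is faithful:
    (hg_faithful : ∀ a : A, g (star a * a) = 0 → a = 0)
    (y : A) (hy : 0 ≤ y) :
    ‖y‖ = sSup {r : ℝ | ∃ c : A, 0 ≤ c ∧ c ≠ 0 ∧ (r : ℂ) = g (c * y * c) / g (c * c)} := by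
  have : Nontrivial A := ⟨1, 0, fun h ↦ by simp [h] at hg_one⟩
  have lub := norm_eq_sSup_state_quotients_general
    (g := .mk₀ g.toLinearMap fun _ ↦ map_nonneg_of_map_star_mul_self_nonneg hg_pos) hg_faithful hy
  exact (lub.csSup_eq lub.nonempty).symm
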